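/- Let $\mathcal A$ be a finite alphabet with $N\ge 2$ letters and $\mathcal W$ the set of finite words over $\mathcal A$, including the empty word $\emptyset$; $|w|$ is the length of $w$, $w^-$ is $w$ with its last letter removed, and $wi$ is $w$ followed by the letter $i$. Let $\sim$ be an equivalence relation on $\mathcal W$ such that $v\sim w$ implies $|v|=|w|$, and let $R(w)$ be the (finite) number of words equivalent to $w$. A mass distribution is a map $m:\mathcal A\to(0,1)$ with $\sum_{a\in\mathcal A}m(a)=1$, extended to words by $m(w_1\cdots w_n)=m(w_1)\cdots m(w_n)$ and $m(\emptyset)=1$. Put $p(v,w)=m(w)/\sum_{\hat v\sim v}m(\hat v)$ if $w=\hat v i$ for some $\hat v\sim v$ and $i\in\mathcal A$, and $p(v,w)=0$ otherwise; let $p_0(v,w)=\delta_v(w)$ and $p_n(v,w)=\sum_{u\in\mathcal W}p_{n-1}(v,u)\,p(u,w)$ for $n\ge1$; let $g(v,w)=p_{|w|-|v|}(v,w)$ if $|w|\ge|v|$ and $g(v,w)=0$ otherwise; and let $q(v,w)=\frac{g(v,w)}{m(w)}\sum_{\hat v\sim v}m(\hat v)$ for $v\ne w$, and $q(v,v)=1$.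 Say that $m$ satisfies (B2) if for every $w\in\mathcal W$ either $m(\tilde w)=m(w)$ for all $\tilde w\sim w$, or $\tilde w^-\sim w^-$ for all $\tilde w\sim w$. If $m$ satisfies (B2), then for all $v,w\in\mathcal W$ and $i\in\mathcal A$ with $v\not\sim w$ and $v\neq wi$, $$q(v,wi)=\frac1{R(w)}\sum_{\tilde w\sim w}q(v,\tilde w).$$ In particular, $q$ is independent of $m$: for a given relation $\sim$, any two mass distributions that satisfy (B2) define the same function $q$ on $\mathcal W\times\mathcal W$. -/

import Mathlib

namespace Martin

/-- Finite words over the alphabet `A`: the empty list is the empty word `∅`,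
`w ++ [i]` is the word `wi`, and `w.dropLast` is the parent `w⁻`. -/
abbrev Word (A : Type*) := List A

/-- A mass distribution on the alphabet: `m(a) ∈ (0,1)` for every letter, total mass one. -/
def IsMassDistribution {A : Type*} [Fintype A] (m : A → ℝ) : Prop :=
  (∀ a, m a ∈ Set.Ioo (0 : ℝ) 1) ∧ ∑ a, m a = 1

/-- The mass of a word: `m(w₁⋯wₙ) = m(w₁)⋯m(wₙ)`, `m(∅) = 1`. -/
noncomputable def mW {A : Type*} (m : A → ℝ) (w : Word A) : ℝ := (w.map m).prod

/-- Total mass of the equivalence class of `v`: `Σ_{v̂ ∼ v} m(v̂)`. The sum is finite when the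
alphabet is finite and equivalent words have the same length. -/
noncomputable def massCl {A : Type*} (sim : Word A → Word A → Prop) (m : A → ℝ)
    (v : Word A) : ℝ :=
  ∑ᶠ u ∈ {u : Word A | sim u v}, mW m u

open Classical in
/-- Transition probability: `p(v,w) = m(w)/(Σ_{v̂∼v} m(v̂))` if `w = v̂i` for some
`v̂ ∼ v` and some letter `i`, and `0` otherwise. -/
noncomputable def pTrans {A : Type*} (sim : Word A → Word A → Prop) (m : A → ℝ)
    (v w : Word A) : ℝ :=
  if ∃ v' : Word A, ∃ i : A, sim v' v ∧ w = v' ++ [i] then mW m w / massCl sim m v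
  else 0

open Classical in
/-- `n`-step transition probabilities: `p₀(v,w) = δ_v(w)`,
`pₙ(v,w) = Σ_u pₙ₋₁(v,u) p(u,w)`. The sum is finite: `p(u,w) ≠ 0` forces `u ∼ w⁻`. -/
noncomputable def pn {A : Type*} (sim : Word A → Word A → Prop) (m : A → ℝ) :
    ℕ → Word A → Word A → ℝ
  | 0, v, w => if w = v then 1 else 0
  | n + 1, v, w => ∑ᶠ u : Word A, pn sim m n v u * pTrans sim m u w

/-- The Green function: `g(v,w) = p_{|w|−|v|}(v,w)`, and `g(v,w) = 0` when `|w| < |v|`. -/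
noncomputable def green {A : Type*} (sim : Word A → Word A → Prop) (m : A → ℝ)
    (v w : Word A) : ℝ :=
  if v.length ≤ w.length then pn sim m (w.length - v.length) v w else 0

open Classical in
/-- The function `q(v,w) = g(v,w)·(Σ_{v̂∼v} m(v̂))/m(w)` for `v ≠ w`, and `q(v,v) = 1`. -/
noncomputable def qfun {A : Type*} (sim : Word A → Word A → Prop) (m : A → ℝ)
    (v w : Word A) : ℝ :=
  if v = w then 1 else green sim m v w * massCl sim m v / mW m w

/-- `R(w)`: the number of words equivalent to `w`. -/
noncomputable def Rnum {A : Type*} (sim : Word A → Word A → Prop) (w : Word A) : ℕ :=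
  Set.ncard {u : Word A | sim u w}

/-- Assumption (B2): for every word `w`, either all words equivalent to `w` have the mass of `w`,
or all words equivalent to `w` have parents equivalent to the parent of `w`. -/
def B2 {A : Type*} (sim : Word A → Word A → Prop) (m : A → ℝ) : Prop :=
  ∀ w : Word A, (∀ w', sim w' w → mW m w' = mW m w) ∨
    (∀ w', sim w' w → sim w'.dropLast w.dropLast)

end Martin

namespace Martin

section Basic

variable {A : Type*} {sim : Word A → Word A → Prop} {m : A → ℝ}

theorem IsMassDistribution.mW_pos [Fintype A] (hm : IsMassDistribution m) (w : Word A) :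
    0 < mW m w := by
  refine List.prod_pos fun x hx => ?_
  obtain ⟨a, -, rfl⟩ := List.mem_map.1 hx
  exact (hm.1 a).1

theorem setOf_sim_eq (hsim : Equivalence sim) {v w : Word A} (h : sim v w) :
    {u : Word A | sim u v} = {u : Word A | sim u w} :=
  Set.ext fun _ => ⟨fun hu => hsim.trans hu h, fun hu => hsim.trans hu (hsim.symm h)⟩

theorem massCl_congr (hsim : Equivalence sim) {v w : Word A} (h : sim v w) :
    massCl sim m v = massCl sim m w := by
  rw [massCl, massCl, setOf_sim_eq hsim h]

theorem finite_setOf_sim [Finite A] (hlen : ∀ v w : Word A, sim v w → v.length = w.length)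
    (w : Word A) : {u : Word A | sim u w}.Finite :=
  (List.finite_length_eq A w.length).subset fun u hu => hlen u w hu

theorem massCl_pos [Fintype A] (hsim : Equivalence sim)
    (hlen : ∀ v w : Word A, sim v w → v.length = w.length) (hm : IsMassDistribution m)
    (w : Word A) : 0 < massCl sim m w := by
  rw [massCl, finsum_mem_eq_finite_toFinset_sum _ (finite_setOf_sim hlen w)]
  refine Finset.sum_pos (fun u _ => hm.mW_pos u) ⟨w, ?_⟩
  simpa using hsim.refl w

theorem pTrans_append (hsim : Equivalence sim) (u w : Word A) (i : A) :
    pTrans sim m u (w ++ [i]) =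
      {x : Word A | sim x w}.indicator (fun _ => mW m (w ++ [i]) / massCl sim m w) u := by
  have key : (∃ v' : Word A, ∃ j : A, sim v' u ∧ w ++ [i] = v' ++ [j]) ↔ sim u w := by
    constructor
    · rintro ⟨v', j, h, e⟩
      obtain ⟨rfl, -⟩ := List.append_inj' e rfl
      exact hsim.symm h
    · exact fun h => ⟨w, i, hsim.symm h, rfl⟩
  by_cases h : sim u w
  · rw [pTrans, if_pos (key.2 h), Set.indicator_of_mem (by exact h), massCl_congr hsim h]
  · rw [pTrans, if_neg (fun h' => h (key.1 h')), Set.indicator_of_notMem (by exact h)]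

theorem pn_succ_append [Finite A] (hsim : Equivalence sim)
    (hlen : ∀ v w : Word A, sim v w → v.length = w.length) (n : ℕ) (v w : Word A) (i : A) :
    pn sim m (n + 1) v (w ++ [i]) =
      (mW m (w ++ [i]) / massCl sim m w) * ∑ᶠ u ∈ {u : Word A | sim u w}, pn sim m n v u := by
  rw [pn, finsum_mem_eq_finite_toFinset_sum _ (finite_setOf_sim hlen w), Finset.mul_sum,
    ← finsum_mem_eq_finite_toFinset_sum _ (finite_setOf_sim hlen w), finsum_mem_def]
  refine finsum_congr fun u => ?_
  rw [pTrans_append hsim]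
  by_cases h : u ∈ {x : Word A | sim x w}
  · rw [Set.indicator_of_mem h, Set.indicator_of_mem h, mul_comm]
  · rw [Set.indicator_of_notMem h, Set.indicator_of_notMem h, mul_zero]

theorem green_append [Finite A] (hsim : Equivalence sim)
    (hlen : ∀ v w : Word A, sim v w → v.length = w.length) {v w : Word A} (i : A)
    (h : v.length ≤ w.length) :
    green sim m v (w ++ [i]) =
      (mW m (w ++ [i]) / massCl sim m w) * ∑ᶠ u ∈ {u : Word A | sim u w}, green sim m v u := by
  have e : (w ++ [i]).length - v.length = (w.length - v.length) + 1 := by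
    rw [List.length_append, List.length_singleton]; omega
  rw [green, if_pos (by rw [List.length_append]; omega), e, pn_succ_append hsim hlen]
  congr 1
  refine finsum_mem_congr rfl fun u hu => ?_
  rw [green, hlen u w hu, if_pos h]

theorem green_eq_zero_of_length_le {v w : Word A} (hne : v ≠ w) (h : w.length ≤ v.length) :
    green sim m v w = 0 := by
  rw [green]
  split_ifs with h'
  · rw [show w.length - v.length = 0 by omega, pn, if_neg hne.symm]
  · rfl

theorem green_self (v : Word A) : green sim m v v = 1 := by
  simp [green, pn]

theorem qfun_eq_zero_of_length_le {v w : Word A} (hne : v ≠ w) (h : w.length ≤ v.length) :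
    qfun sim m v w = 0 := by
  rw [qfun, if_neg hne, green_eq_zero_of_length_le hne h, zero_mul, zero_div]

/-- On words extending `w`, the function `q(v, ·)` is determined by the class of `w`. -/
theorem qfun_append [Fintype A] (hsim : Equivalence sim)
    (hlen : ∀ v w : Word A, sim v w → v.length = w.length) (hm : IsMassDistribution m)
    {v w : Word A} (i : A) (h : v.length ≤ w.length) :
    qfun sim m v (w ++ [i]) =
      massCl sim m v / massCl sim m w * ∑ᶠ u ∈ {u : Word A | sim u w}, green sim m v u := by
  have hne : v ≠ w ++ [i] := by
    rintro rfl
    rw [List.length_append, List.length_singleton] at h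
    omega
  have := (hm.mW_pos (w ++ [i])).ne'
  have := (massCl_pos hsim hlen hm w).ne'
  rw [qfun, if_neg hne, green_append hsim hlen i h]
  field_simp

theorem qfun_append_of_sim [Fintype A] (hsim : Equivalence sim)
    (hlen : ∀ v w : Word A, sim v w → v.length = w.length) (hm : IsMassDistribution m)
    {v w : Word A} (i : A) (h : sim v w) : qfun sim m v (w ++ [i]) = 1 := by
  have hsum : ∑ᶠ u ∈ {u : Word A | sim u w}, green sim m v u = 1 := by
    rw [finsum_mem_eq_finite_toFinset_sum _ (finite_setOf_sim hlen w),
      Finset.sum_eq_single v, green_self]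
    · intro u hu hne
      have hu : sim u w := by simpa using hu
      exact green_eq_zero_of_length_le hne.symm ((hlen u w hu).trans (hlen v w h).symm).le
    · intro hv
      exact absurd (by simpa using h) hv
  rw [qfun_append hsim hlen hm i (hlen v w h).le, hsum, massCl_congr hsim h, mul_one,
    div_self (massCl_pos hsim hlen hm w).ne']

theorem qfun_congr_of_dropLast [Fintype A] (hsim : Equivalence sim)
    (hlen : ∀ v w : Word A, sim v w → v.length = w.length) (hm : IsMassDistribution m)
    {v u w : Word A} (hvu : v.length < u.length) (hvw : v.length < w.length)
    (h : sim u.dropLast w.dropLast) : qfun sim m v u = qfun sim m v w := by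
  have hu : u ≠ [] := by rintro rfl; simp at hvu
  have hw : w ≠ [] := by rintro rfl; simp at hvw
  rw [← List.dropLast_append_getLast hu, ← List.dropLast_append_getLast hw,
    qfun_append hsim hlen hm _ (by rw [List.length_dropLast]; omega),
    qfun_append hsim hlen hm _ (by rw [List.length_dropLast]; omega),
    massCl_congr hsim h, setOf_sim_eq hsim h]

theorem Rnum_eq_card [Finite A] (hlen : ∀ v w : Word A, sim v w → v.length = w.length)
    (w : Word A) : Rnum sim w = (finite_setOf_sim hlen w).toFinset.card :=
  Set.ncard_eq_toFinset_card _ _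

theorem Rnum_pos [Finite A] (hsim : Equivalence sim)
    (hlen : ∀ v w : Word A, sim v w → v.length = w.length) (w : Word A) : 0 < Rnum sim w := by
  rw [Rnum_eq_card hlen]
  exact Finset.card_pos.2 ⟨w, by simpa using hsim.refl w⟩

/-- `q(v, wi)` is the mass-weighted mean of `q(v, ·)` over the class of `w`. -/
theorem qfun_append_eq_weighted_sum [Fintype A] (hsim : Equivalence sim)
    (hlen : ∀ v w : Word A, sim v w → v.length = w.length) (hm : IsMassDistribution m)
    {v w : Word A} (i : A) (h : v.length < w.length) :
    massCl sim m w * qfun sim m v (w ++ [i]) =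
      ∑ u ∈ (finite_setOf_sim hlen w).toFinset, mW m u * qfun sim m v u := by
  have := (massCl_pos hsim hlen hm w).ne'
  rw [qfun_append hsim hlen hm i h.le,
    finsum_mem_eq_finite_toFinset_sum _ (finite_setOf_sim hlen w), ← mul_assoc,
    mul_div_cancel₀ _ this, Finset.mul_sum]
  refine Finset.sum_congr rfl fun u hu => ?_
  have hu : sim u w := by simpa using hu
  have hne : v ≠ u := by
    rintro rfl
    exact h.ne (hlen v w hu)
  have := (hm.mW_pos u).ne'
  rw [qfun, if_neg hne]
  field_simp

theorem qfun_append_eq_average [Fintype A] (hsim : Equivalence sim)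
    (hlen : ∀ v w : Word A, sim v w → v.length = w.length) (hm : IsMassDistribution m)
    (hB : B2 sim m) {v w : Word A} (i : A) (hv : ¬ sim v w) (hne : v ≠ w ++ [i]) :
    qfun sim m v (w ++ [i]) =
      (1 / (Rnum sim w : ℝ)) * ∑ᶠ w' ∈ {u : Word A | sim u w}, qfun sim m v w' := by
  rcases le_or_gt w.length v.length with h | h
  · have hsum : ∑ᶠ w' ∈ {u : Word A | sim u w}, qfun sim m v w' = 0 := by
      refine finsum_mem_eq_zero_of_forall_eq_zero fun u hu => ?_
      refine qfun_eq_zero_of_length_le ?_ ((hlen u w hu).le.trans h)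
      rintro rfl
      exact hv hu
    rw [hsum, mul_zero]
    rcases h.eq_or_lt with h | h
    · rw [qfun_append hsim hlen hm i h.ge, finsum_mem_eq_zero_of_forall_eq_zero, mul_zero]
      intro u hu
      refine green_eq_zero_of_length_le ?_ ((hlen u w hu).trans h).le
      rintro rfl
      exact hv hu
    · exact qfun_eq_zero_of_length_le hne (by rw [List.length_append]; exact h)
  have hR : (Rnum sim w : ℝ) ≠ 0 := by exact_mod_cast (Rnum_pos hsim hlen w).ne'
  have hM := (massCl_pos hsim hlen hm w).ne'
  have key := qfun_append_eq_weighted_sum hsim hlen hm i h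
  have hmass : massCl sim m w = ∑ u ∈ (finite_setOf_sim hlen w).toFinset, mW m u :=
    finsum_mem_eq_finite_toFinset_sum _ _
  rw [finsum_mem_eq_finite_toFinset_sum _ (finite_setOf_sim hlen w)]
  rcases hB w with hc | hp
  · have hmem : ∀ u ∈ (finite_setOf_sim hlen w).toFinset, mW m u = mW m w :=
      fun u hu => hc u (by simpa using hu)
    have hw := (hm.mW_pos w).ne'
    rw [Finset.sum_congr rfl hmem, Finset.sum_const, ← Rnum_eq_card hlen, nsmul_eq_mul] at hmass
    rw [Finset.sum_congr rfl fun u hu => by rw [hmem u hu], ← Finset.mul_sum, hmass] at key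
    rw [one_div, eq_inv_mul_iff_mul_eq₀ hR]
    apply mul_left_cancel₀ hw
    rw [← key]
    ring
  · have hmem : ∀ u ∈ (finite_setOf_sim hlen w).toFinset, qfun sim m v u = qfun sim m v w := by
      intro u hu
      have hu : sim u w := by simpa using hu
      exact qfun_congr_of_dropLast hsim hlen hm (by rwa [hlen u w hu]) h (hp u hu)
    rw [Finset.sum_congr rfl fun u hu => by rw [hmem u hu], ← Finset.sum_mul, ← hmass] at key
    rw [Finset.sum_congr rfl hmem, Finset.sum_const, ← Rnum_eq_card hlen, nsmul_eq_mul,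
      mul_left_cancel₀ hM key, ← mul_assoc, one_div_mul_cancel hR, one_mul]

theorem qfun_independent [Fintype A] (hsim : Equivalence sim)
    (hlen : ∀ v w : Word A, sim v w → v.length = w.length) {m' : A → ℝ}
    (hm : IsMassDistribution m) (hB : B2 sim m) (hm' : IsMassDistribution m')
    (hB' : B2 sim m') (v : Word A) (n : ℕ) :
    ∀ w : Word A, w.length = n → qfun sim m v w = qfun sim m' v w := by
  induction n with
  | zero =>
    intro w hw
    by_cases hvw : v = w
    · rw [qfun, qfun, if_pos hvw, if_pos hvw]
    · rw [qfun_eq_zero_of_length_le hvw (by omega), qfun_eq_zero_of_length_le hvw (by omega)]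
  | succ n ih =>
    intro w hw
    by_cases hvw : v = w
    · rw [qfun, qfun, if_pos hvw, if_pos hvw]
    obtain ⟨x, i, rfl⟩ : ∃ x i, w = x ++ [i] := by
      have hne : w ≠ [] := by rintro rfl; simp at hw
      exact ⟨_, _, (List.dropLast_append_getLast hne).symm⟩
    have hx : x.length = n := by simpa using hw
    by_cases hs : sim v x
    · rw [qfun_append_of_sim hsim hlen hm i hs, qfun_append_of_sim hsim hlen hm' i hs]
    · rw [qfun_append_eq_average hsim hlen hm hB i hs hvw,
        qfun_append_eq_average hsim hlen hm' hB' i hs hvw]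
      congr 1
      exact finsum_mem_congr rfl fun u hu => ih u ((hlen u x hu).trans hx)

end Basic

end Martin

theorem qfun_average {A : Type*} [Fintype A] (hA : 2 ≤ Fintype.card A)
    (sim : Martin.Word A → Martin.Word A → Prop) (hsim : Equivalence sim)
    (hlen : ∀ v w : Martin.Word A, sim v w → v.length = w.length) :
    (∀ m : A → ℝ, Martin.IsMassDistribution m → Martin.B2 sim m →
      ∀ (v w : Martin.Word A) (i : A), ¬ sim v w → v ≠ w ++ [i] →
        Martin.qfun sim m v (w ++ [i]) =
          (1 / (Martin.Rnum sim w : ℝ)) *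
            ∑ᶠ w' ∈ {u : Martin.Word A | sim u w}, Martin.qfun sim m v w') ∧
    (∀ m m' : A → ℝ, Martin.IsMassDistribution m → Martin.B2 sim m →
      Martin.IsMassDistribution m' → Martin.B2 sim m' →
      ∀ v w : Martin.Word A, Martin.qfun sim m v w = Martin.qfun sim m' v w) :=
  ⟨fun _ hm hB _ _ i hv hne => Martin.qfun_append_eq_average hsim hlen hm hB i hv hne,
    fun _ _ hm hB hm' hB' v w => Martin.qfun_independent hsim hlen hm hB hm' hB' v _ w rfl⟩
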